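/- arXiv:1807.02744 — 3 statements merged into one kernel-verified Lean document; each statement's English description precedes it below -/
import Mathlib

section
/- For every integer m ≥ 1, the polynomial 1 − 2T + 2T² divides the polynomial (−1)^m + 2^{2m−2}·T^{4m−4} in ℚ[T]. -/
open Polynomial

theorem sq_sub_two_mul_add_two_mul_sq_dvd_pow_four_add {R : Type*} [CommRing R] (a b : R) :
    a ^ 2 - 2 * a * b + 2 * b ^ 2 ∣ a ^ 4 + 4 * b ^ 4 :=
  ⟨a ^ 2 + 2 * a * b + 2 * b ^ 2, pow_four_add_four_mul_pow_four'⟩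

theorem sq_sub_two_mul_add_two_mul_sq_dvd_pow_sub_pow {R : Type*} [CommRing R] (a b : R)
    (k : ℕ) : a ^ 2 - 2 * a * b + 2 * b ^ 2 ∣ (4 * b ^ 4) ^ k - (-a ^ 4) ^ k := by
  have base : a ^ 2 - 2 * a * b + 2 * b ^ 2 ∣ 4 * b ^ 4 - -a ^ 4 := by
    simpa only [sub_neg_eq_add, add_comm] using
      sq_sub_two_mul_add_two_mul_sq_dvd_pow_four_add a b
  exact base.trans (sub_dvd_pow_sub_pow _ _ k)

theorem one_sub_two_X_add_two_X_sq_dvd_general {R : Type*} [CommRing R] (x : R) (m : ℕ)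
    (hm : 1 ≤ m) :
    1 - 2 * x + 2 * x ^ 2 ∣ (-1) ^ m + 2 ^ (2 * m - 2) * x ^ (4 * m - 4) := by
  obtain ⟨k, rfl⟩ := Nat.exists_eq_add_of_le' hm
  -- Sophie Germain's identity makes `4 * x ^ 4` congruent to `-1` modulo the divisor.
  have congruence : 1 - 2 * x + 2 * x ^ 2 ∣ (4 * x ^ 4) ^ k - (-1) ^ k := by
    simpa only [one_pow, mul_one] using sq_sub_two_mul_add_two_mul_sq_dvd_pow_sub_pow 1 x k
  have two_pow : (2 : R) ^ (2 * k) = 4 ^ k := by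
    rw [pow_mul]
    norm_num
  have dividend_eq : (-1) ^ (k + 1) + 2 ^ (2 * (k + 1) - 2) * x ^ (4 * (k + 1) - 4) =
      (4 * x ^ 4) ^ k - (-1) ^ k :=
    calc
      (-1) ^ (k + 1) + 2 ^ (2 * (k + 1) - 2) * x ^ (4 * (k + 1) - 4)
        = (-1) ^ (k + 1) + 2 ^ (2 * k) * x ^ (4 * k) := rfl
      _ = (-1) ^ (k + 1) + (4 * x ^ 4) ^ k := by rw [two_pow, mul_pow, pow_mul x]
      _ = (4 * x ^ 4) ^ k - (-1) ^ k := by ring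
  rwa [dividend_eq]

/-- `1 − 2T + 2T²` divides `(−1)^m + 2^{2m−2}·T^{4m−4}` in `ℚ[T]`. -/
theorem one_sub_two_X_add_two_X_sq_dvd (m : ℕ) (hm : 1 ≤ m) :
    (1 - 2 * X + 2 * X ^ 2 : Polynomial ℚ) ∣
      (-1 : Polynomial ℚ) ^ m + 2 ^ (2 * m - 2) * X ^ (4 * m - 4) :=
  one_sub_two_X_add_two_X_sq_dvd_general X m hm
end

section
/- For every integer ℓ ≥ 8 divisible by 4, with m = ℓ/4 and c_ℓ = (−1)^m + 2^{(ℓ−4)/2}, the set of complex zeros of the polynomial P_ℓ(T) = (1/c_ℓ)·((−1)^m + 2^{(ℓ−4)/2}T^{ℓ−4})/(1 − 2T + 2T²) is exactly { z ∈ ℂ : z^{ℓ−4} = (−1)^{m+1}·2^{−(ℓ−4)/2} } \ { (1+i)/2, (1−i)/2 }. -/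
open Polynomial Complex

/-- The zeta polynomial `P_ℓ(T) = (1/c_ℓ)·((−1)^{ℓ/4} + 2^{(ℓ−4)/2}·T^{ℓ−4})/(1 − 2T + 2T²)`
of the normalized Eisenstein polynomial, where `c_ℓ = (−1)^{ℓ/4} + 2^{(ℓ−4)/2}`.
The division is exact in `ℚ[T]` (Euclidean division). -/
noncomputable def zetaPolyEis (ℓ : ℕ) : Polynomial ℚ :=
  Polynomial.C (((-1 : ℚ) ^ (ℓ / 4) + 2 ^ ((ℓ - 4) / 2))⁻¹) *
    ((Polynomial.C ((-1 : ℚ) ^ (ℓ / 4)) +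
        Polynomial.C ((2 : ℚ) ^ ((ℓ - 4) / 2)) * Polynomial.X ^ (ℓ - 4)) /
      (1 - 2 * Polynomial.X + 2 * Polynomial.X ^ 2))

/-!
Write `ℓ = 4(k + 1)`. The numerator of the zeta polynomial is `(4x⁴)ᵏ - (-1)ᵏ`, which is divisible
by `4x⁴ + 1`, hence by `1 - 2x + 2x²` by Sophie Germain's identity
`4x⁴ + 1 = (1 - 2x + 2x²)(1 + 2x + 2x²)`. For `k ≠ 0` the numerator is separable, so the division
removes the zeros `(1 ± i)/2` of the denominator and no others.
-/

theorem neg_one_pow_add_ne_zero {R : Type*} [Ring R] [LinearOrder R] [IsOrderedRing R]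
    {a : R} (ha : 1 < a) (m : ℕ) : (-1) ^ m + a ≠ 0 := by
  intro h
  have habs : |a| = 1 := by rw [eq_neg_of_add_eq_zero_right h, abs_neg, abs_neg_one_pow]
  exact ha.not_ge ((le_abs_self a).trans_eq habs)

theorem separable_C_add_C_mul_X_pow {K : Type*} [Field K] {a b : K} {n : ℕ} (ha : a ≠ 0)
    (hb : b ≠ 0) (hn : (n : K) ≠ 0) : (C a + C b * X ^ n).Separable := by
  have hfactor : C a + C b * X ^ n = C b * (X ^ n - C (-(b⁻¹ * a))) := by
    rw [C_neg, sub_neg_eq_add, mul_add, ← C_mul, mul_inv_cancel_left₀ hb, add_comm]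
  rw [hfactor]
  exact Separable.unit_mul (isUnit_C.2 hb.isUnit)
    (separable_X_pow_sub_C _ hn (neg_ne_zero.2 (mul_ne_zero (inv_ne_zero hb) ha)))

theorem aeval_div_eq_zero_iff_of_separable {K A : Type*} [Field K] [CommRing A] [IsDomain A]
    [Algebra K A] {p q : K[X]} (hp : p.Separable) (hqp : q ∣ p) (z : A) :
    aeval z (p / q) = 0 ↔ aeval z p = 0 ∧ aeval z q ≠ 0 := by
  obtain ⟨r, rfl⟩ := hqp
  have hq : q ≠ 0 := left_ne_zero_of_mul hp.ne_zero
  have hcoprime : aeval z q ≠ 0 ∨ aeval z r ≠ 0 := aeval_ne_zero_of_isCoprime hp.isCoprime z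
  rw [mul_div_cancel_left₀ r hq, map_mul, mul_eq_zero]
  tauto

theorem one_sub_two_mul_add_two_mul_sq_dvd {R : Type*} [CommRing R] (x : R) (k : ℕ) :
    1 - 2 * x + 2 * x ^ 2 ∣ (-1) ^ (k + 1) + 2 ^ (2 * k) * x ^ (4 * k) := by
  have hgermain : 4 * x ^ 4 - -1 = (1 - 2 * x + 2 * x ^ 2) * (1 + 2 * x + 2 * x ^ 2) := by ring
  have hpow : (-1) ^ (k + 1) + 2 ^ (2 * k) * x ^ (4 * k) = (4 * x ^ 4) ^ k - (-1) ^ k := by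
    rw [mul_pow, ← pow_mul, pow_mul (2 : R)]
    ring
  rw [hpow]
  exact (Dvd.intro _ hgermain.symm).trans (sub_dvd_pow_sub_pow _ _ k)

theorem one_sub_two_mul_add_two_mul_sq_eq_zero_iff {K : Type*} [Field K] [NeZero (2 : K)]
    {i : K} (hi : i ^ 2 = -1) (z : K) :
    1 - 2 * z + 2 * z ^ 2 = 0 ↔ z = (1 + i) / 2 ∨ z = (1 - i) / 2 := by
  have hfactor : 1 - 2 * z + 2 * z ^ 2 = 2 * ((z - (1 + i) / 2) * (z - (1 - i) / 2)) := by
    field_simp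
    linear_combination hi
  simp only [hfactor, mul_eq_zero, two_ne_zero, false_or, sub_eq_zero]

theorem neg_one_pow_add_mul_eq_zero_iff {K : Type*} [Field K] {b : K} (hb : b ≠ 0) (w : K)
    (m : ℕ) : (-1) ^ m + b * w = 0 ↔ w = (-1) ^ (m + 1) * b⁻¹ := by
  rw [eq_mul_inv_iff_mul_eq₀ hb, pow_succ, mul_neg_one, mul_comm w, eq_neg_iff_add_eq_zero,
    add_comm]

theorem aeval_zetaPolyEis_eq_zero_iff {A : Type*} [CommRing A] [IsDomain A] [Algebra ℚ A]
    {ℓ : ℕ} (hℓ : 8 ≤ ℓ) (h4 : 4 ∣ ℓ) (z : A) :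
    aeval z (zetaPolyEis ℓ) = 0 ↔
      (-1) ^ (ℓ / 4) + 2 ^ ((ℓ - 4) / 2) * z ^ (ℓ - 4) = 0 ∧ 1 - 2 * z + 2 * z ^ 2 ≠ 0 := by
  have hc : (-1 : ℚ) ^ (ℓ / 4) + 2 ^ ((ℓ - 4) / 2) ≠ 0 :=
    neg_one_pow_add_ne_zero (one_lt_pow₀ one_lt_two (by omega)) _
  have hunit : IsUnit (C (((-1 : ℚ) ^ (ℓ / 4) + 2 ^ ((ℓ - 4) / 2))⁻¹)) :=
    isUnit_C.2 (inv_ne_zero hc).isUnit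
  have hseparable :
      (C ((-1 : ℚ) ^ (ℓ / 4)) + C (2 ^ ((ℓ - 4) / 2)) * X ^ (ℓ - 4)).Separable :=
    separable_C_add_C_mul_X_pow (pow_ne_zero _ (by norm_num)) (pow_ne_zero _ two_ne_zero)
      (Nat.cast_ne_zero.2 (by omega))
  have hdvd : 1 - 2 * X + 2 * X ^ 2 ∣
      C ((-1 : ℚ) ^ (ℓ / 4)) + C (2 ^ ((ℓ - 4) / 2)) * X ^ (ℓ - 4) := by
    obtain ⟨k, hquarter, hhalf, hdegree⟩ :
        ∃ k, ℓ / 4 = k + 1 ∧ (ℓ - 4) / 2 = 2 * k ∧ ℓ - 4 = 4 * k :=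
      ⟨ℓ / 4 - 1, by omega, by omega, by omega⟩
    rw [hquarter, hhalf, hdegree]
    simpa only [map_pow, map_neg, map_one, map_ofNat] using
      one_sub_two_mul_add_two_mul_sq_dvd (X : ℚ[X]) k
  rw [zetaPolyEis, map_mul, (hunit.map (aeval z)).mul_right_eq_zero,
    aeval_div_eq_zero_iff_of_separable hseparable hdvd]
  simp only [map_add, map_sub, map_mul, map_pow, map_neg, map_one, map_ofNat, aeval_X]

/-- The complex zeros of the zeta polynomial `P_ℓ` are exactly the `(ℓ−4)`-th roots of
`(−1)^{ℓ/4+1}·2^{−(ℓ−4)/2}` other than `(1±i)/2`. -/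
theorem zetaPolyEis_zeros (ℓ : ℕ) (hℓ : 8 ≤ ℓ) (h4 : 4 ∣ ℓ) :
    {z : ℂ | Polynomial.aeval z (zetaPolyEis ℓ) = 0} =
      {z : ℂ | z ^ (ℓ - 4) = (-1 : ℂ) ^ (ℓ / 4 + 1) * ((2 : ℂ) ^ ((ℓ - 4) / 2))⁻¹} \
        {(1 + Complex.I) / 2, (1 - Complex.I) / 2} := by
  have hpow : (2 : ℂ) ^ ((ℓ - 4) / 2) ≠ 0 := pow_ne_zero _ two_ne_zero
  ext z
  simp only [Set.mem_ofPred_eq, Set.mem_sdiff, Set.mem_insert_iff, Set.mem_singleton_iff]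
  rw [aeval_zetaPolyEis_eq_zero_iff hℓ h4, neg_one_pow_add_mul_eq_zero_iff hpow, Ne,
    one_sub_two_mul_add_two_mul_sq_eq_zero_iff I_sq]
end

section
/- Let p be an odd prime with p ≥ 5, and set ℓ = 2(p−1), m = (p−1)/2, c_ℓ = (−1)^m + 2^{p−3}. Then every coefficient of the normalized Eisenstein polynomial φ̃_ℓ(x₀,x₁) = x₀^ℓ + x₁^ℓ + Σ_{0<j<ℓ, 4∣j} ((−1)^m · binom(ℓ,j) / c_ℓ) · x₀^{ℓ−j} x₁^{j} is p-integral; that is, for every integer j with 0 < j < ℓ and 4 ∣ j, the rational number (−1)^m · binom(ℓ,j) / c_ℓ has nonnegative p-adic valuation. -/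
/-! Since `2 ^ (p - 1) ≡ 1` modulo `p`, we have `4 * c ≡ 4 * (-1) ^ m + 1 ∈ {5, -3}` for
`c = (-1) ^ m + 2 ^ (p - 3)`, so for `p ≥ 7` the denominator `c` is prime to `p`. For `p = 5` we
have `ℓ = 8` and `c = 5`, which cancels against the binomial coefficient `C(8, 4) = 70`. -/

theorem padicValRat_intCast_div_intCast_nonneg {p : ℕ} {b : ℤ} (hb : ¬ (p : ℤ) ∣ b) (a : ℤ) :
    0 ≤ padicValRat p ((a : ℚ) / b) := by
  have hden : ¬ p ∣ ((a : ℚ) / b).den := fun h ↦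
    hb <| (Int.natCast_dvd_natCast.2 h).trans <| Rat.divInt_eq_div a b ▸ Rat.den_dvd a b
  rw [padicValRat, padicValNat.eq_zero_of_not_dvd hden, Nat.cast_zero, sub_zero]
  exact Int.natCast_nonneg _

theorem four_mul_add_two_pow_sub_three_modEq {p : ℕ} (hp : p.Prime) (hp2 : p ≠ 2) (e : ℤ) :
    4 * (e + 2 ^ (p - 3)) ≡ 4 * e + 1 [ZMOD p] := by
  have hcop : IsCoprime (2 : ℤ) p :=
    Nat.isCoprime_iff_coprime.2 <| (Nat.coprime_primes Nat.prime_two hp).2 hp2.symm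
  have hexp : p - 1 = p - 3 + 2 := by have := hp.two_le; omega
  calc 4 * (e + 2 ^ (p - 3)) = 4 * e + 2 ^ (p - 1) := by rw [hexp]; ring
    _ ≡ 4 * e + 1 [ZMOD p] := (Int.ModEq.pow_card_sub_one_eq_one hp hcop).add_left _

theorem eq_three_or_eq_five_of_dvd_neg_one_pow_add_two_pow {p : ℕ} (hp : p.Prime) (hp2 : p ≠ 2)
    {k : ℕ} (h : (p : ℤ) ∣ (-1) ^ k + 2 ^ (p - 3)) : p = 3 ∨ p = 5 := by
  have hdvd : (p : ℤ) ∣ 4 * (-1) ^ k + 1 :=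
    (four_mul_add_two_pow_sub_three_modEq hp hp2 _).dvd_iff.1 (h.mul_left 4)
  rcases neg_one_pow_eq_or ℤ k with hk | hk <;> rw [hk] at hdvd
  · exact .inr <| (Nat.prime_dvd_prime_iff_eq hp Nat.prime_five).1 <|
      Int.natCast_dvd_natCast.1 (by simpa using hdvd)
  · exact .inl <| (Nat.prime_dvd_prime_iff_eq hp Nat.prime_three).1 <|
      Int.natCast_dvd_natCast.1 (by simpa using hdvd)

theorem normEis_coeff_p_integral_general {p : ℕ} (hp : p.Prime) (h5 : 5 ≤ p) {j : ℕ}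
    (hj : p = 5 → j = 4) :
    0 ≤ padicValRat p ((-1 : ℚ) ^ ((p - 1) / 2) * ((2 * (p - 1)).choose j : ℚ) /
        ((-1 : ℚ) ^ ((p - 1) / 2) + 2 ^ (p - 3))) := by
  obtain rfl | hp5 := eq_or_ne p 5
  · have hcoeff : ((-1 : ℚ) ^ ((5 - 1) / 2) * ((2 * (5 - 1)).choose 4 : ℚ) /
        ((-1 : ℚ) ^ ((5 - 1) / 2) + 2 ^ (5 - 3))) = (14 : ℕ) := by
      norm_num [Nat.choose]
    rw [hj rfl, hcoeff]
    exact zero_le_padicValRat_of_nat 14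
  · have hc : ¬ (p : ℤ) ∣ (-1) ^ ((p - 1) / 2) + 2 ^ (p - 3) := fun h ↦ by
      have := eq_three_or_eq_five_of_dvd_neg_one_pow_add_two_pow hp (by omega) h
      omega
    exact_mod_cast padicValRat_intCast_div_intCast_nonneg hc
      ((-1) ^ ((p - 1) / 2) * (2 * (p - 1)).choose j)

/-- For an odd prime `p ≥ 5` and `ℓ = 2(p−1)`, every coefficient of the normalized
Eisenstein polynomial `φ̃_ℓ` is `p`-integral: for each `j` with `0 < j < ℓ` and `4 ∣ j`,
the rational number `(−1)^{(p−1)/2}·C(ℓ,j)/((−1)^{(p−1)/2} + 2^{p−3})` has nonnegative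
`p`-adic valuation. -/
theorem normEis_coeff_p_integral (p : ℕ) (hp : p.Prime) (hodd : Odd p) (h5 : 5 ≤ p)
    (j : ℕ) (hj0 : 0 < j) (hjl : j < 2 * (p - 1)) (h4j : 4 ∣ j) :
    0 ≤ padicValRat p ((-1 : ℚ) ^ ((p - 1) / 2) * ((2 * (p - 1)).choose j : ℚ) /
        ((-1 : ℚ) ^ ((p - 1) / 2) + 2 ^ (p - 3))) :=
  normEis_coeff_p_integral_general hp h5 fun hp5 ↦ by omega
end
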